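/- Sphere case. Assume −(b k + k²) > c²/4 and 2 μ c − b k + 2 k² < 0. Let W : (0,∞) → ℝ³ be a nonconstant similarity spherical profile with lim_{r→0⁺} W(r) = (1,0,0) and lim_{r→0⁺} r |W′(r)| = 0, set s(r) = arccos(W(r)·e₀) ∈ [0,π], and let s⋆ = lim_{r→∞} s(r) (which exists). Then s⋆ ∈ (0, π). -/

import Mathlib

open Set Filter

/-- Euclidean dot product on `ℝ³`. -/
noncomputable def dot3 (v w : Fin 3 → ℝ) : ℝ := v 0 * w 0 + v 1 * w 1 + v 2 * w 2

/-- Euclidean norm on `ℝ³`. -/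
noncomputable def norm3 (v : Fin 3 → ℝ) : ℝ := Real.sqrt (dot3 v v)

/-- Cross product on `ℝ³`. -/
noncomputable def cross3 (v w : Fin 3 → ℝ) : Fin 3 → ℝ :=
  ![v 1 * w 2 - v 2 * w 1, v 2 * w 0 - v 0 * w 2, v 0 * w 1 - v 1 * w 0]

/-- The north pole `e₀ = (1,0,0)`. -/
noncomputable def e0 : Fin 3 → ℝ := ![1, 0, 0]

/-- `g(w) = (k²/2)(1 − w²) + bk(1 − w) − k²(1 − w)²`. -/
noncomputable def gfun (k b : ℝ) (w : ℝ) : ℝ :=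
  k ^ 2 / 2 * (1 - w ^ 2) + b * k * (1 - w) - k ^ 2 * (1 - w) ^ 2

/-- A similarity spherical profile on `J ⊆ (0,∞)`: a twice differentiable
`W : J → S² ⊂ ℝ³` solving the reduced similarity equation (5.5). -/
def IsSimProfile (k b c μ : ℝ) (J : Set ℝ) (W : ℝ → Fin 3 → ℝ) : Prop :=
  J ⊆ Ioi (0:ℝ) ∧
  (∀ r ∈ J, DifferentiableAt ℝ W r ∧ DifferentiableAt ℝ (deriv W) r) ∧
  (∀ r ∈ J, dot3 (W r) (W r) = 1) ∧
  (∀ r ∈ J,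
    deriv (deriv W) r + dot3 (deriv W r) (deriv W r) • W r + (1 / r) • deriv W r
      + (deriv (gfun k b) (dot3 (W r) e0) / r ^ 2) • (e0 - dot3 (W r) e0 • W r)
      + μ • (e0 - dot3 (W r) e0 • W r)
      + (c / r - r / 2) • cross3 (W r) (deriv W r) = 0)

/-!
Write `x = W · e`, `P = r² |W′|²` and `M = r e · (W × W′)`. Crossing the equation with `W` gives
`M′ = (c - r² / 2) x′`, and pairing it with `r² W′` then gives the first integral
`P / 2 + V = 2 μ M` with `V = g(x) - g(1) - 2 μ c (1 - x)`. The sign condition says that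
`V ≥ δ (1 - x)` for some `δ > 0`, while `M² ≤ P (1 - x²)` by Cauchy-Schwarz. Eliminating `P` yields
`δ (1 - x) ≤ 2 μ² (1 - x²)`, which keeps `x` away from `-1` wherever `x ≠ 1`, and
`|M| ≤ 8 |μ| (1 - x)`.

To keep `x` away from `1`, put `I = (r² / 2 - c) (1 - x) - M`. Then `I′ = r (1 - x) ≥ 0` and
`I → 0` as `r → 0⁺`, so `I` is positive once `W` has left the pole. Since
`I ≤ q (1 - x)` with `q = r² / 2 + |c| + 8 |μ|` and `q′ = r`, the quotient `I / q` is
nondecreasing, and it bounds `1 - x` from below.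
-/

open scoped Matrix Topology

section Calculus

theorem monotoneOn_of_hasDerivAt_nonneg {D : Set ℝ} (hD : Convex ℝ D) {f f' : ℝ → ℝ}
    (hf : ∀ x ∈ D, HasDerivAt f (f' x) x) (hf' : ∀ x ∈ D, 0 ≤ f' x) : MonotoneOn f D :=
  monotoneOn_of_hasDerivWithinAt_nonneg hD
    (fun x hx => (hf x hx).continuousAt.continuousWithinAt)
    (fun x hx => (hf x (interior_subset hx)).hasDerivWithinAt)
    (fun x hx => hf' x (interior_subset hx))

variable {f f' : ℝ → ℝ} {a l x : ℝ}

theorem le_of_hasDerivAt_nonneg_of_tendsto_nhdsGT (hf : ∀ x > a, HasDerivAt f (f' x) x)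
    (hf' : ∀ x > a, 0 ≤ f' x) (hl : Tendsto f (𝓝[>] a) (𝓝 l)) (hx : a < x) : l ≤ f x := by
  have hmono : MonotoneOn f (Ioi a) := monotoneOn_of_hasDerivAt_nonneg (convex_Ioi a) hf hf'
  refine le_of_tendsto hl ?_
  filter_upwards [Ioo_mem_nhdsGT hx] with t ht using hmono ht.1 hx ht.2.le

theorem lt_of_hasDerivAt_nonneg_of_tendsto_nhdsGT (hf : ∀ x > a, HasDerivAt f (f' x) x)
    (hf' : ∀ x > a, 0 ≤ f' x) (hl : Tendsto f (𝓝[>] a) (𝓝 l)) (hx : a < x) (hpos : 0 < f' x) :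
    l < f x := by
  have hle : ∀ t > a, l ≤ f t :=
    fun t ht => le_of_hasDerivAt_nonneg_of_tendsto_nhdsGT hf hf' hl ht
  refine (hle x hx).lt_of_ne fun heq => hpos.ne' ?_
  have hmin : IsLocalMin f x := by
    filter_upwards [Ioi_mem_nhds hx] with t ht using heq ▸ hle t ht
  exact hmin.hasDerivAt_eq_zero (hf x hx)

theorem eq_of_hasDerivAt_zero_of_tendsto_nhdsGT (hf : ∀ x > a, HasDerivAt f 0 x)
    (hl : Tendsto f (𝓝[>] a) (𝓝 l)) (hx : a < x) : f x = l := by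
  refine le_antisymm ?_ (le_of_hasDerivAt_nonneg_of_tendsto_nhdsGT hf (fun _ _ => le_rfl) hl hx)
  have hneg : ∀ t > a, HasDerivAt (fun s => -f s) 0 t :=
    fun t ht => by simpa using (hf t ht).fun_neg
  have hle : -l ≤ -f x :=
    le_of_hasDerivAt_nonneg_of_tendsto_nhdsGT (f := fun t => -f t) hneg (fun _ _ => le_rfl)
      hl.neg hx
  exact neg_le_neg_iff.1 hle

theorem monotoneOn_div_of_hasDerivAt {D : Set ℝ} (hD : Convex ℝ D) {p q q' u : ℝ → ℝ}
    (hp : ∀ x ∈ D, HasDerivAt p (q' x * u x) x) (hq : ∀ x ∈ D, HasDerivAt q (q' x) x)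
    (hq' : ∀ x ∈ D, 0 ≤ q' x) (hqpos : ∀ x ∈ D, 0 < q x) (hle : ∀ x ∈ D, p x ≤ q x * u x) :
    MonotoneOn (fun x => p x / q x) D := by
  refine monotoneOn_of_hasDerivAt_nonneg hD
    (fun x hx => (hp x hx).fun_div (hq x hx) (hqpos x hx).ne') fun x hx => ?_
  have hnum : q' x * u x * q x - p x * q' x = q' x * (q x * u x - p x) := by ring
  rw [hnum]
  exact div_nonneg (mul_nonneg (hq' x hx) (sub_nonneg.2 (hle x hx))) (sq_nonneg _)

end Calculus

section VectorAlgebra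

variable {R : Type*} [CommRing R] [LinearOrder R] [IsStrictOrderedRing R]
variable {n : Type*} [Fintype n] {v w : n → R}

theorem dotProduct_sq_le_mul (v w : n → R) : (v ⬝ᵥ w) ^ 2 ≤ (v ⬝ᵥ v) * (w ⬝ᵥ w) := by
  simpa only [dotProduct, sq] using Finset.sum_mul_sq_le_sq_mul_sq Finset.univ v w

theorem dotProduct_mem_Icc_of_unit (hv : v ⬝ᵥ v = 1) (hw : w ⬝ᵥ w = 1) :
    v ⬝ᵥ w ∈ Icc (-1 : R) 1 := by
  have hsq : (v ⬝ᵥ w) ^ 2 ≤ 1 := by simpa only [hv, hw, mul_one] using dotProduct_sq_le_mul v w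
  exact abs_le.1 ((sq_le_one_iff_abs_le_one _).1 hsq)

theorem dotProduct_lt_one_of_unit_of_ne (hv : v ⬝ᵥ v = 1) (hw : w ⬝ᵥ w = 1) (hne : v ≠ w) :
    v ⬝ᵥ w < 1 := by
  refine (dotProduct_mem_Icc_of_unit hv hw).2.lt_of_ne fun h => hne (sub_eq_zero.1 ?_)
  rw [← dotProduct_self_eq_zero, sub_dotProduct, dotProduct_sub, dotProduct_sub,
    dotProduct_comm w v, hv, hw, h]
  norm_num

theorem tripleProduct_sq_le (u v w : Fin 3 → R) :
    (u ⬝ᵥ v ⨯₃ w) ^ 2 ≤ (w ⬝ᵥ w) * ((u ⬝ᵥ u) * (v ⬝ᵥ v) - (u ⬝ᵥ v) ^ 2) := by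
  have hgram : u ⨯₃ v ⬝ᵥ u ⨯₃ v = (u ⬝ᵥ u) * (v ⬝ᵥ v) - (u ⬝ᵥ v) ^ 2 := by
    rw [cross_dot_cross, dotProduct_comm v u, sq]
  rw [triple_product_permutation, triple_product_permutation, ← hgram]
  exact dotProduct_sq_le_mul _ _

end VectorAlgebra

section MomentumBounds

variable {R : Type*} [Field R] [LinearOrder R] [IsStrictOrderedRing R] {a M P V μ : R}

theorem le_two_mul_sq_mul_of_half_add_eq (ha : 0 ≤ a) (hP : 0 ≤ P)
    (hM : M ^ 2 ≤ P * a) (hV : P / 2 + V = 2 * μ * M) : V ≤ 2 * μ ^ 2 * a := by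
  have hsq : (2 * μ * M) ^ 2 ≤ (P / 2 + 2 * μ ^ 2 * a) ^ 2 := by
    calc (2 * μ * M) ^ 2 = 4 * μ ^ 2 * M ^ 2 := by ring
      _ ≤ 4 * μ ^ 2 * (P * a) := by gcongr
      _ ≤ (P / 2 + 2 * μ ^ 2 * a) ^ 2 := by
        linarith [four_mul_le_sq_add (P / 2) (2 * μ ^ 2 * a)]
  linarith [le_of_sq_le_sq hsq (by positivity)]

theorem abs_le_four_mul_of_half_add_eq (ha : 0 ≤ a) (hV₀ : 0 ≤ V)
    (hM : M ^ 2 ≤ P * a) (hV : P / 2 + V = 2 * μ * M) : |M| ≤ 4 * |μ| * a := by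
  have hP : P ≤ 4 * |μ| * |M| := by
    have hμM : μ * M ≤ |μ| * |M| := (le_abs_self _).trans_eq (abs_mul μ M)
    linarith
  have hmul : |M| * |M| ≤ 4 * |μ| * a * |M| := by
    calc |M| * |M| = M ^ 2 := by rw [abs_mul_abs_self, sq]
      _ ≤ 4 * |μ| * |M| * a := hM.trans (mul_le_mul_of_nonneg_right hP ha)
      _ = 4 * |μ| * a * |M| := by ring
  rcases (abs_nonneg M).eq_or_lt with hM₀ | hM₀
  · rw [← hM₀]
    positivity
  · exact le_of_mul_le_mul_right hmul hM₀

end MomentumBounds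

section VectorCalculus

variable {𝕜 : Type*} [NontriviallyNormedField 𝕜] {x : 𝕜}

theorem hasDerivAt_dotProduct {n : Type*} [Fintype n] {v w : 𝕜 → n → 𝕜} {v' w' : n → 𝕜}
    (hv : HasDerivAt v v' x) (hw : HasDerivAt w w' x) :
    HasDerivAt (fun t => v t ⬝ᵥ w t) (v' ⬝ᵥ w x + v x ⬝ᵥ w') x := by
  simp only [dotProduct, ← Finset.sum_add_distrib]
  exact HasDerivAt.fun_sum fun i _ => (hasDerivAt_pi.1 hv i).fun_mul (hasDerivAt_pi.1 hw i)

theorem hasDerivAt_crossProduct {v w : 𝕜 → Fin 3 → 𝕜} {v' w' : Fin 3 → 𝕜}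
    (hv : HasDerivAt v v' x) (hw : HasDerivAt w w' x) :
    HasDerivAt (fun t => v t ⨯₃ w t) (v' ⨯₃ w x + v x ⨯₃ w') x := by
  have hminor (i j : Fin 3) : HasDerivAt (fun t => v t i * w t j - v t j * w t i)
      (v' i * w x j - v' j * w x i + (v x i * w' j - v x j * w' i)) x := by
    have hprod (i j : Fin 3) := (hasDerivAt_pi.1 hv i).fun_mul (hasDerivAt_pi.1 hw j)
    exact ((hprod i j).fun_sub (hprod j i)).congr_deriv (by ring)
  refine hasDerivAt_pi.2 fun i => ?_
  fin_cases i
  exacts [hminor 1 2, hminor 2 0, hminor 0 1]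

end VectorCalculus

/-- A similarity spherical profile on `(0,∞)` for an arbitrary potential `g` and pole `e`; the
predicate `IsSimProfile` on `(0,∞)` is the case `g = gfun k b`, `e = e0`. -/
structure IsSphericalProfile (g : ℝ → ℝ) (c μ : ℝ) (e : Fin 3 → ℝ) (W : ℝ → Fin 3 → ℝ) :
    Prop where
  differentiableAt : ∀ r > 0, DifferentiableAt ℝ W r
  differentiableAt_deriv : ∀ r > 0, DifferentiableAt ℝ (deriv W) r
  dotProduct_self : ∀ r > 0, W r ⬝ᵥ W r = 1
  equation : ∀ r > 0,
    deriv (deriv W) r + (deriv W r ⬝ᵥ deriv W r) • W r + (1 / r) • deriv W r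
      + (deriv g (W r ⬝ᵥ e) / r ^ 2) • (e - (W r ⬝ᵥ e) • W r)
      + μ • (e - (W r ⬝ᵥ e) • W r)
      + (c / r - r / 2) • W r ⨯₃ deriv W r = 0

/-- The squared speed `r² |W′(r)|²` of a curve in the logarithmic variable `log r`. -/
noncomputable def logSpeedSq (W : ℝ → Fin 3 → ℝ) (r : ℝ) : ℝ :=
  r ^ 2 * (deriv W r ⬝ᵥ deriv W r)

/-- The component along `e` of the angular momentum `W × r W′` of a curve in the logarithmic
variable `log r`. -/
noncomputable def axialMomentum (e : Fin 3 → ℝ) (W : ℝ → Fin 3 → ℝ) (r : ℝ) : ℝ :=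
  r * (e ⬝ᵥ W r ⨯₃ deriv W r)

/-- The closed form, for a profile emanating from the pole `e`, of the accumulated deviation
`∫₀^r ρ (1 - W(ρ) · e) dρ`. -/
noncomputable def accumulatedDeviation (c : ℝ) (e : Fin 3 → ℝ) (W : ℝ → Fin 3 → ℝ) (r : ℝ) : ℝ :=
  (r ^ 2 / 2 - c) * (1 - W r ⬝ᵥ e) - axialMomentum e W r

theorem logSpeedSq_nonneg (W : ℝ → Fin 3 → ℝ) (r : ℝ) : 0 ≤ logSpeedSq W r :=
  mul_nonneg (sq_nonneg r) (by simpa using dotProduct_self_star_nonneg (deriv W r))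

namespace IsSphericalProfile

variable {g : ℝ → ℝ} {c μ : ℝ} {e : Fin 3 → ℝ} {W : ℝ → Fin 3 → ℝ} {r : ℝ}

theorem dotProduct_deriv_eq_zero (hW : IsSphericalProfile g c μ e W) (hr : 0 < r) :
    W r ⬝ᵥ deriv W r = 0 := by
  have hd := (hW.differentiableAt r hr).hasDerivAt
  have hconst : HasDerivAt (fun t => W t ⬝ᵥ W t) 0 r :=
    (hasDerivAt_const r (1 : ℝ)).congr_of_eventuallyEq <| by
      filter_upwards [Ioi_mem_nhds hr] with t ht using hW.dotProduct_self t ht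
  have hsum := (hasDerivAt_dotProduct hd hd).unique hconst
  rw [dotProduct_comm (deriv W r)] at hsum
  linarith

theorem hasDerivAt_dotProduct_pole (hW : IsSphericalProfile g c μ e W) (hr : 0 < r) :
    HasDerivAt (fun t => W t ⬝ᵥ e) (deriv W r ⬝ᵥ e) r := by
  simpa using hasDerivAt_dotProduct (hW.differentiableAt r hr).hasDerivAt (hasDerivAt_const r e)

theorem hasDerivAt_logSpeedSq (hW : IsSphericalProfile g c μ e W) (hr : 0 < r) :
    HasDerivAt (logSpeedSq W)
      (-2 * (deriv g (W r ⬝ᵥ e) + μ * r ^ 2) * (deriv W r ⬝ᵥ e)) r := by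
  have hd := (hW.differentiableAt_deriv r hr).hasDerivAt
  have hprod := (hasDerivAt_pow 2 r).fun_mul (hasDerivAt_dotProduct hd hd)
  refine hprod.congr_deriv ?_
  have heq := congrArg (deriv W r ⬝ᵥ ·) (hW.equation r hr)
  have horth : deriv W r ⬝ᵥ W r = 0 := by
    rw [dotProduct_comm, hW.dotProduct_deriv_eq_zero hr]
  simp only [dotProduct_add, dotProduct_smul, dotProduct_sub, dot_cross_self, dotProduct_zero,
    smul_eq_mul, horth] at heq
  rw [dotProduct_comm (deriv (deriv W) r)]
  field_simp at heq
  push_cast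
  linear_combination heq

theorem hasDerivAt_axialMomentum (hW : IsSphericalProfile g c μ e W) (hr : 0 < r) :
    HasDerivAt (axialMomentum e W) ((c - r ^ 2 / 2) * (deriv W r ⬝ᵥ e)) r := by
  have hcross := hasDerivAt_crossProduct (hW.differentiableAt r hr).hasDerivAt
    (hW.differentiableAt_deriv r hr).hasDerivAt
  have hprod := (hasDerivAt_id' r).fun_mul (hasDerivAt_dotProduct (hasDerivAt_const r e) hcross)
  refine hprod.congr_deriv ?_
  have heq := congrArg (fun v => e ⬝ᵥ W r ⨯₃ v) (hW.equation r hr)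
  simp only [map_add, map_smul, map_sub, map_zero, cross_self, cross_cross_eq_smul_sub_smul',
    dotProduct_add, dotProduct_smul, dotProduct_sub, dot_cross_self, dotProduct_zero,
    smul_eq_mul, hW.dotProduct_self r hr, hW.dotProduct_deriv_eq_zero hr] at heq
  simp only [cross_self, zero_add, zero_dotProduct]
  rw [dotProduct_comm (deriv W r) e]
  field_simp at heq
  refine mul_left_cancel₀ hr.ne' ?_
  linear_combination heq / 2

theorem hasDerivAt_accumulatedDeviation (hW : IsSphericalProfile g c μ e W) (hr : 0 < r) :
    HasDerivAt (accumulatedDeviation c e W) (r * (1 - W r ⬝ᵥ e)) r := by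
  have hquad : HasDerivAt (fun t : ℝ => t ^ 2 / 2 - c) r r := by
    simpa using ((hasDerivAt_pow 2 r).div_const 2).sub_const c
  have hdev := (hW.hasDerivAt_dotProduct_pole hr).const_sub 1
  exact ((hquad.fun_mul hdev).fun_sub (hW.hasDerivAt_axialMomentum hr)).congr_deriv (by ring)

theorem dotProduct_pole_mem_Icc (hW : IsSphericalProfile g c μ e W) (he : e ⬝ᵥ e = 1)
    (hr : 0 < r) : W r ⬝ᵥ e ∈ Icc (-1 : ℝ) 1 :=
  dotProduct_mem_Icc_of_unit (hW.dotProduct_self r hr) he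

theorem one_sub_dotProduct_pole_sq_nonneg (hW : IsSphericalProfile g c μ e W)
    (he : e ⬝ᵥ e = 1) (hr : 0 < r) : 0 ≤ 1 - (W r ⬝ᵥ e) ^ 2 :=
  sub_nonneg.2 <| (sq_le_one_iff_abs_le_one _).2 <| abs_le.2 <| hW.dotProduct_pole_mem_Icc he hr

theorem axialMomentum_sq_le (hW : IsSphericalProfile g c μ e W) (he : e ⬝ᵥ e = 1)
    (hr : 0 < r) : axialMomentum e W r ^ 2 ≤ logSpeedSq W r * (1 - (W r ⬝ᵥ e) ^ 2) := by
  have htriple := tripleProduct_sq_le e (W r) (deriv W r)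
  rw [he, hW.dotProduct_self r hr, one_mul, dotProduct_comm e (W r)] at htriple
  calc axialMomentum e W r ^ 2 = r ^ 2 * (e ⬝ᵥ W r ⨯₃ deriv W r) ^ 2 := mul_pow _ _ _
    _ ≤ r ^ 2 * ((deriv W r ⬝ᵥ deriv W r) * (1 - (W r ⬝ᵥ e) ^ 2)) := by gcongr
    _ = logSpeedSq W r * (1 - (W r ⬝ᵥ e) ^ 2) := (mul_assoc _ _ _).symm

section Emanating

variable (hW : IsSphericalProfile g c μ e W) (hW₀ : Tendsto W (𝓝[>] 0) (𝓝 e))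

include hW hW₀

theorem pole_dotProduct_self : e ⬝ᵥ e = 1 := by
  have hlim : Tendsto (fun t => W t ⬝ᵥ W t) (𝓝[>] 0) (𝓝 (e ⬝ᵥ e)) :=
    ((by fun_prop : Continuous fun v : Fin 3 → ℝ => v ⬝ᵥ v).tendsto e).comp hW₀
  refine tendsto_nhds_unique (hlim.congr' ?_) tendsto_const_nhds
  filter_upwards [self_mem_nhdsWithin] with t ht using hW.dotProduct_self t ht

theorem tendsto_dotProduct_pole : Tendsto (fun t => W t ⬝ᵥ e) (𝓝[>] 0) (𝓝 1) := by
  rw [← hW.pole_dotProduct_self hW₀]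
  exact ((by fun_prop : Continuous fun v : Fin 3 → ℝ => v ⬝ᵥ e).tendsto e).comp hW₀

variable (hS₀ : Tendsto (logSpeedSq W) (𝓝[>] 0) (𝓝 0))

include hS₀

theorem tendsto_axialMomentum : Tendsto (axialMomentum e W) (𝓝[>] 0) (𝓝 0) := by
  have hbound : Tendsto (fun t => logSpeedSq W t * (1 - (W t ⬝ᵥ e) ^ 2)) (𝓝[>] 0) (𝓝 0) := by
    simpa using hS₀.mul (((hW.tendsto_dotProduct_pole hW₀).pow 2).const_sub 1)
  have hsq : Tendsto (fun t => axialMomentum e W t ^ 2) (𝓝[>] 0) (𝓝 0) := by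
    refine squeeze_zero' (Eventually.of_forall fun t => sq_nonneg _) ?_ hbound
    filter_upwards [self_mem_nhdsWithin] with t ht
    exact hW.axialMomentum_sq_le (hW.pole_dotProduct_self hW₀) ht
  refine (tendsto_zero_iff_abs_tendsto_zero _).2 ?_
  simpa only [Real.sqrt_zero, Real.sqrt_sq_eq_abs, Function.comp_def] using hsq.sqrt

theorem tendsto_accumulatedDeviation :
    Tendsto (accumulatedDeviation c e W) (𝓝[>] 0) (𝓝 0) := by
  have hquad : Tendsto (fun t : ℝ => t ^ 2 / 2 - c) (𝓝[>] 0) (𝓝 (0 ^ 2 / 2 - c)) :=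
    tendsto_nhdsWithin_of_tendsto_nhds
      ((by fun_prop : Continuous fun t : ℝ => t ^ 2 / 2 - c).tendsto 0)
  have hlim : Tendsto (accumulatedDeviation c e W) (𝓝[>] 0)
      (𝓝 ((0 ^ 2 / 2 - c) * (1 - 1) - 0)) :=
    (hquad.mul ((hW.tendsto_dotProduct_pole hW₀).const_sub 1)).sub
      (hW.tendsto_axialMomentum hW₀ hS₀)
  simpa using hlim

theorem accumulatedDeviation_pos (hr : 0 < r) (hne : W r ≠ e) :
    0 < accumulatedDeviation c e W r := by
  have he := hW.pole_dotProduct_self hW₀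
  refine lt_of_hasDerivAt_nonneg_of_tendsto_nhdsGT
    (fun t ht => hW.hasDerivAt_accumulatedDeviation ht)
    (fun t ht => mul_nonneg ht.le (sub_nonneg.2 (hW.dotProduct_pole_mem_Icc he ht).2))
    (hW.tendsto_accumulatedDeviation hW₀ hS₀) hr (mul_pos hr (sub_pos.2 ?_))
  exact dotProduct_lt_one_of_unit_of_ne (hW.dotProduct_self r hr) he hne

variable (hg : Differentiable ℝ g)

include hg

/-- A Pohozaev identity: pairing the equation with `r² W′` leaves the term
`μ r² (W · e)′`, which only becomes a total derivative through `hasDerivAt_axialMomentum`. -/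
theorem half_logSpeedSq_add_eq (hr : 0 < r) :
    logSpeedSq W r / 2 + (g (W r ⬝ᵥ e) - g 1 - 2 * μ * c * (1 - W r ⬝ᵥ e))
      = 2 * μ * axialMomentum e W r := by
  set E : ℝ → ℝ := fun t => logSpeedSq W t / 2
    + (g (W t ⬝ᵥ e) - g 1 - 2 * μ * c * (1 - W t ⬝ᵥ e)) - 2 * μ * axialMomentum e W t
  have hderiv : ∀ t > 0, HasDerivAt E 0 t := fun t ht => by
    have hx := hW.hasDerivAt_dotProduct_pole ht
    have hgx := (hg (W t ⬝ᵥ e)).hasDerivAt.comp t hx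
    refine ((((hW.hasDerivAt_logSpeedSq ht).div_const 2).fun_add
      ((hgx.sub_const (g 1)).fun_sub ((hx.const_sub 1).const_mul (2 * μ * c)))).fun_sub
      ((hW.hasDerivAt_axialMomentum ht).const_mul (2 * μ))).congr_deriv ?_
    ring
  have hlim : Tendsto E (𝓝[>] 0) (𝓝 0) := by
    have hx := hW.tendsto_dotProduct_pole hW₀
    have hgx := (hg.continuous.tendsto 1).comp hx
    simpa using ((hS₀.div_const 2).add ((hgx.sub_const (g 1)).sub
      ((hx.const_sub 1).const_mul (2 * μ * c)))).sub
      ((hW.tendsto_axialMomentum hW₀ hS₀).const_mul (2 * μ))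
  have hzero : E r = 0 := eq_of_hasDerivAt_zero_of_tendsto_nhdsGT hderiv hlim hr
  exact sub_eq_zero.1 hzero

variable {m : ℝ} (hgm : ∀ x ∈ Icc (-1 : ℝ) 1, m * (1 - x) ≤ g x - g 1)

include hgm

theorem sub_mul_one_sub_le (hr : 0 < r) :
    (m - 2 * μ * c) * (1 - W r ⬝ᵥ e) ≤ 2 * μ ^ 2 * (1 - (W r ⬝ᵥ e) ^ 2) := by
  have he := hW.pole_dotProduct_self hW₀
  have hV := le_two_mul_sq_mul_of_half_add_eq (hW.one_sub_dotProduct_pole_sq_nonneg he hr)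
    (logSpeedSq_nonneg W r) (hW.axialMomentum_sq_le he hr)
    (hW.half_logSpeedSq_add_eq hW₀ hS₀ hg hr)
  linarith [hgm _ (hW.dotProduct_pole_mem_Icc he hr)]

theorem div_sub_one_le_dotProduct_pole (hr : 0 < r) (hlt : W r ⬝ᵥ e < 1) :
    (m - 2 * μ * c) / (2 * μ ^ 2 + 1) - 1 ≤ W r ⬝ᵥ e := by
  have hmul : (m - 2 * μ * c) * (1 - W r ⬝ᵥ e)
      ≤ 2 * μ ^ 2 * (W r ⬝ᵥ e + 1) * (1 - W r ⬝ᵥ e) := by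
    linarith [hW.sub_mul_one_sub_le hW₀ hS₀ hg hgm hr]
  have hle : m - 2 * μ * c ≤ 2 * μ ^ 2 * (W r ⬝ᵥ e + 1) :=
    le_of_mul_le_mul_right hmul (sub_pos.2 hlt)
  have hx := (hW.dotProduct_pole_mem_Icc (hW.pole_dotProduct_self hW₀) hr).1
  rw [sub_le_iff_le_add, div_le_iff₀ (by positivity)]
  linarith

theorem abs_axialMomentum_le (hm : 2 * μ * c ≤ m) (hr : 0 < r) :
    |axialMomentum e W r| ≤ 8 * |μ| * (1 - W r ⬝ᵥ e) := by
  have he := hW.pole_dotProduct_self hW₀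
  have hx := hW.dotProduct_pole_mem_Icc he hr
  have hV : 0 ≤ g (W r ⬝ᵥ e) - g 1 - 2 * μ * c * (1 - W r ⬝ᵥ e) := by
    linarith [hgm _ hx, mul_le_mul_of_nonneg_right hm (sub_nonneg.2 hx.2)]
  have hM := abs_le_four_mul_of_half_add_eq (hW.one_sub_dotProduct_pole_sq_nonneg he hr) hV
    (hW.axialMomentum_sq_le he hr) (hW.half_logSpeedSq_add_eq hW₀ hS₀ hg hr)
  have ha : 1 - (W r ⬝ᵥ e) ^ 2 ≤ 2 * (1 - W r ⬝ᵥ e) := by linarith [sq_nonneg (1 - W r ⬝ᵥ e)]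
  calc |axialMomentum e W r| ≤ 4 * |μ| * (1 - (W r ⬝ᵥ e) ^ 2) := hM
    _ ≤ 4 * |μ| * (2 * (1 - W r ⬝ᵥ e)) := by gcongr
    _ = 8 * |μ| * (1 - W r ⬝ᵥ e) := by ring

theorem accumulatedDeviation_le (hm : 2 * μ * c ≤ m) (hr : 0 < r) :
    accumulatedDeviation c e W r ≤ (r ^ 2 / 2 + (|c| + 8 * |μ|)) * (1 - W r ⬝ᵥ e) := by
  have hM := neg_le_of_abs_le (hW.abs_axialMomentum_le hW₀ hS₀ hg hgm hm hr)
  have hdev := sub_nonneg.2 (hW.dotProduct_pole_mem_Icc (hW.pole_dotProduct_self hW₀) hr).2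
  have hc := mul_le_mul_of_nonneg_right (neg_abs_le c) hdev
  unfold accumulatedDeviation
  linarith

theorem exists_pos_le_one_sub_dotProduct_pole (hm : 2 * μ * c ≤ m) (hr : 0 < r)
    (hne : W r ≠ e) : ∃ ε > 0, ∀ t ≥ r, ε ≤ 1 - W t ⬝ᵥ e := by
  set q : ℝ → ℝ := fun t => t ^ 2 / 2 + (|c| + 8 * |μ|)
  have hpos : ∀ t ∈ Ici r, 0 < t := fun t ht => hr.trans_le ht
  have hqpos : ∀ t ∈ Ici r, 0 < q t := fun t ht => by
    have := hpos t ht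
    positivity
  have hq : ∀ t ∈ Ici r, HasDerivAt q t t := fun t _ => by
    simpa [q] using ((hasDerivAt_pow 2 t).div_const 2).add_const (|c| + 8 * |μ|)
  have hle : ∀ t ∈ Ici r, accumulatedDeviation c e W t ≤ q t * (1 - W t ⬝ᵥ e) :=
    fun t ht => hW.accumulatedDeviation_le hW₀ hS₀ hg hgm hm (hpos t ht)
  have hmono : MonotoneOn (fun t => accumulatedDeviation c e W t / q t) (Ici r) :=
    monotoneOn_div_of_hasDerivAt (convex_Ici r)
      (fun t ht => hW.hasDerivAt_accumulatedDeviation (hpos t ht)) hq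
      (fun t ht => (hpos t ht).le) hqpos hle
  refine ⟨accumulatedDeviation c e W r / q r,
    div_pos (hW.accumulatedDeviation_pos hW₀ hS₀ hr hne) (hqpos r self_mem_Ici), fun t ht => ?_⟩
  calc accumulatedDeviation c e W r / q r ≤ accumulatedDeviation c e W t / q t :=
        hmono self_mem_Ici ht ht
    _ ≤ 1 - W t ⬝ᵥ e := (div_le_iff₀' (hqpos t ht)).2 (hle t ht)

theorem exists_dotProduct_pole_mem_Icc (hm : 2 * μ * c < m) (hr : 0 < r) (hne : W r ≠ e) :
    ∃ a > -1, ∃ b < 1, ∀ t ≥ r, W t ⬝ᵥ e ∈ Icc a b := by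
  obtain ⟨ε, hε, hdev⟩ := hW.exists_pos_le_one_sub_dotProduct_pole hW₀ hS₀ hg hgm hm.le hr hne
  have hpos : 0 < (m - 2 * μ * c) / (2 * μ ^ 2 + 1) := div_pos (sub_pos.2 hm) (by positivity)
  refine ⟨(m - 2 * μ * c) / (2 * μ ^ 2 + 1) - 1, by linarith, 1 - ε, by linarith, fun t ht => ?_⟩
  have hlt : W t ⬝ᵥ e < 1 := by linarith [hdev t ht]
  exact ⟨hW.div_sub_one_le_dotProduct_pole hW₀ hS₀ hg hgm (hr.trans_le ht) hlt,
    by linarith [hdev t ht]⟩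

end Emanating

end IsSphericalProfile

section Potential

variable (k b : ℝ)

theorem differentiable_gfun : Differentiable ℝ (gfun k b) := by
  unfold gfun
  fun_prop

theorem mul_one_sub_le_gfun_sub {x : ℝ} (hx : x ∈ Icc (-1 : ℝ) 1) :
    (b * k - 2 * k ^ 2) * (1 - x) ≤ gfun k b x - gfun k b 1 := by
  have hgap : gfun k b x - gfun k b 1 - (b * k - 2 * k ^ 2) * (1 - x)
      = 3 / 2 * k ^ 2 * ((1 - x) * (x + 1)) := by
    unfold gfun
    ring
  have hnonneg : 0 ≤ (1 - x) * (x + 1) :=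
    mul_nonneg (sub_nonneg.2 hx.2) (by linarith [hx.1])
  rw [← sub_nonneg, hgap]
  positivity

end Potential

theorem dot3_eq_dotProduct (v w : Fin 3 → ℝ) : dot3 v w = v ⬝ᵥ w :=
  (Matrix.vec3_dotProduct v w).symm

theorem cross3_eq_crossProduct (v w : Fin 3 → ℝ) : cross3 v w = v ⨯₃ w :=
  (cross_apply v w).symm

theorem mul_norm3_deriv_sq (W : ℝ → Fin 3 → ℝ) (r : ℝ) :
    (r * norm3 (deriv W r)) ^ 2 = logSpeedSq W r := by
  have hnonneg : 0 ≤ deriv W r ⬝ᵥ deriv W r := by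
    simpa using dotProduct_self_star_nonneg (deriv W r)
  rw [norm3, dot3_eq_dotProduct, mul_pow, Real.sq_sqrt hnonneg, logSpeedSq]

theorem IsSimProfile.isSphericalProfile {k b c μ : ℝ} {W : ℝ → Fin 3 → ℝ}
    (hW : IsSimProfile k b c μ (Ioi 0) W) : IsSphericalProfile (gfun k b) c μ e0 W := by
  obtain ⟨-, hdiff, hunit, heq⟩ := hW
  simp only [dot3_eq_dotProduct, cross3_eq_crossProduct] at hunit heq
  exact ⟨fun r hr => (hdiff r hr).1, fun r hr => (hdiff r hr).2, hunit, heq⟩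

theorem stmt17_general (k b c μ : ℝ) (hsgn : 2 * μ * c - b * k + 2 * k ^ 2 < 0)
    (W : ℝ → Fin 3 → ℝ)
    (hprof : IsSimProfile k b c μ (Ioi 0) W)
    (hnonconst : ∃ r₁ > (0 : ℝ), ∃ r₂ > (0 : ℝ), W r₁ ≠ W r₂)
    (hlim0 : Tendsto W (nhdsWithin 0 (Ioi 0)) (nhds e0))
    (hlim1 : Tendsto (fun r => r * norm3 (deriv W r)) (nhdsWithin 0 (Ioi 0)) (nhds 0)) :
    ∃ α β : ℝ, Icc α β ⊆ Ioo 0 Real.pi ∧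
      ∀ᶠ r in atTop, Real.arccos (dot3 (W r) e0) ∈ Icc α β := by
  obtain ⟨r, hr, hne⟩ : ∃ r > 0, W r ≠ e0 := by
    by_contra! hconst
    obtain ⟨r₁, hr₁, r₂, hr₂, hne⟩ := hnonconst
    exact hne ((hconst r₁ hr₁).trans (hconst r₂ hr₂).symm)
  have hS₀ : Tendsto (logSpeedSq W) (𝓝[>] 0) (𝓝 0) := by
    simpa [mul_norm3_deriv_sq] using hlim1.pow 2
  obtain ⟨x₁, hx₁, x₂, hx₂, hmem⟩ := hprof.isSphericalProfile.exists_dotProduct_pole_mem_Icc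
    hlim0 hS₀ (differentiable_gfun k b) (fun _ => mul_one_sub_le_gfun_sub k b)
    (by linarith) hr hne
  refine ⟨Real.arccos x₂, Real.arccos x₁,
    Icc_subset_Ioo (Real.arccos_pos.2 hx₂) (Real.arccos_lt_pi.2 hx₁), ?_⟩
  filter_upwards [eventually_ge_atTop r] with t ht
  rw [dot3_eq_dotProduct]
  exact ⟨Real.arccos_le_arccos (hmem t ht).2, Real.arccos_le_arccos (hmem t ht).1⟩

/-- Sphere case: if `−(bk + k²) > c²/4` and `2μc − bk + 2k² < 0`, then the limit
`s⋆ = lim_{r→∞} arccos(W(r)·e₀)` of a nonconstant similarity spherical profile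
emanating from the north pole lies strictly between `0` and `π`. -/
theorem stmt17 (k b c μ : ℝ) (hb : -(b * k + k ^ 2) > c ^ 2 / 4)
    (hsgn : 2 * μ * c - b * k + 2 * k ^ 2 < 0)
    (W : ℝ → Fin 3 → ℝ)
    (hprof : IsSimProfile k b c μ (Ioi 0) W)
    (hnonconst : ∃ r₁ > (0:ℝ), ∃ r₂ > (0:ℝ), W r₁ ≠ W r₂)
    (hlim0 : Tendsto W (nhdsWithin 0 (Ioi 0)) (nhds e0))
    (hlim1 : Tendsto (fun r => r * norm3 (deriv W r)) (nhdsWithin 0 (Ioi 0)) (nhds 0))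
    (sstar : ℝ)
    (hlim : Tendsto (fun r => Real.arccos (dot3 (W r) e0)) atTop (nhds sstar)) :
    0 < sstar ∧ sstar < Real.pi := by
  obtain ⟨α, β, hαβ, hmem⟩ := stmt17_general k b c μ hsgn W hprof hnonconst hlim0 hlim1
  exact hαβ (isClosed_Icc.mem_of_tendsto hlim hmem)
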